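/- Let 𝒮 be a maximal totally singular subspace of (R^3, q^3), where (R,q) is a non-singular 2m-dimensional plus-type quadratic space over F_2. For i ∈ {1,2,3} let S_i be the image under the i-th projection of the subspace of 𝒮 vanishing in the other two coordinates. If 𝒮 contains no non-zero vector supported in a single coordinate position for at least one of the three coordinates (i.e., min dim S_i = 0 after reordering, with k_1 ≥ k_2 ≥ k_3), then the i-th projection ρ_i(𝒮) equals S_i^⊥, and in particular dim ρ_3(𝒮) = 2m, dim ρ_2(𝒮) = 2m - k_2, dim ρ_1(𝒮) = 2m - k_1. -/

import Mathlib

open QuadraticMap Module Submodule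

section
variable {R : Type*} [AddCommGroup R] [Module (ZMod 2) R]

def IsTotallySingular (Q : QuadraticForm (ZMod 2) R) (S : Submodule (ZMod 2) R) : Prop :=
  ∀ x ∈ S, Q x = 0

def QuadNonsingular (Q : QuadraticForm (ZMod 2) R) : Prop :=
  ∀ a : R, (∀ b : R, polar Q a b = 0) → a = 0

def IsPlusType (Q : QuadraticForm (ZMod 2) R) (m : ℕ) : Prop :=
  (∃ S : Submodule (ZMod 2) R, IsTotallySingular Q S ∧ Module.finrank (ZMod 2) S = m) ∧
  ∀ S : Submodule (ZMod 2) R, IsTotallySingular Q S → Module.finrank (ZMod 2) S ≤ m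

def orthComp (Q : QuadraticForm (ZMod 2) R) (A : Submodule (ZMod 2) R) :
    Submodule (ZMod 2) R where
  carrier := {x | ∀ a ∈ A, polar Q x a = 0}
  add_mem' := fun hx hy a ha => by
    rw [polar_add_left, hx a ha, hy a ha, add_zero]
  zero_mem' := fun a ha => by simp [polar]
  smul_mem' := fun c x hx a ha => by
    rw [polar_smul_left, hx a ha, smul_zero]

def NonsingularOn (Q : QuadraticForm (ZMod 2) R) (A : Submodule (ZMod 2) R) : Prop :=
  ∀ x ∈ A, (∀ y ∈ A, polar Q x y = 0) → x = 0

end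

section
variable {R : Type*} [AddCommGroup R] [Module (ZMod 2) R]

/-- The i-th coordinate projection R³ → R. -/
def proj3 (i : Fin 3) : (Fin 3 → R) →ₗ[ZMod 2] R := LinearMap.proj i

/-- S_i = ρ_i(𝒮^{(jk)}), the i-th projection of the part of 𝒮 vanishing in the
j-th and k-th coordinates. -/
def coordPart (𝒮 : Submodule (ZMod 2) (Fin 3 → R)) (i j k : Fin 3) :
    Submodule (ZMod 2) R :=
  Submodule.map (proj3 i) (𝒮 ⊓ LinearMap.ker (proj3 j) ⊓ LinearMap.ker (proj3 k))

end

section Helpers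
variable {R : Type*} [AddCommGroup R] [Module (ZMod 2) R]

/-- The orthogonal sum of three copies of the polar form. -/
noncomputable def B3 (Q : QuadraticForm (ZMod 2) R) : LinearMap.BilinForm (ZMod 2) (Fin 3 → R) :=
  ∑ i : Fin 3, (Q.polarBilin).compl₁₂ (proj3 i) (proj3 i)

lemma B3_apply (Q : QuadraticForm (ZMod 2) R) (v w : Fin 3 → R) :
    B3 Q v w = polar Q (v 0) (w 0) + polar Q (v 1) (w 1) + polar Q (v 2) (w 2) := by
  simp [B3, Fin.sum_univ_three, proj3]

lemma B3_single (Q : QuadraticForm (ZMod 2) R) (v : Fin 3 → R) (i : Fin 3) (a : R) :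
    B3 Q v (Pi.single i a) = polar Q (v i) a := by
  rw [B3_apply]
  fin_cases i <;> simp

lemma B3_refl (Q : QuadraticForm (ZMod 2) R) : (B3 Q).IsRefl := by
  intro v w h
  rw [B3_apply] at h ⊢
  simpa only [polar_comm Q (w _)] using h

lemma polarBilin_refl (Q : QuadraticForm (ZMod 2) R) :
    LinearMap.BilinForm.IsRefl Q.polarBilin := by
  intro v w h
  simp only [polarBilin_apply_apply] at h ⊢
  rwa [polar_comm]

lemma polarBilin_nondeg (Q : QuadraticForm (ZMod 2) R) (hns : QuadNonsingular Q) :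
    LinearMap.BilinForm.Nondegenerate Q.polarBilin := by
  refine (polarBilin_refl Q).nondegenerate_iff_separatingLeft.2 ?_
  intro a h
  exact hns a h

lemma B3_nondeg (Q : QuadraticForm (ZMod 2) R) (hns : QuadNonsingular Q) :
    (B3 Q).Nondegenerate := by
  refine (B3_refl Q).nondegenerate_iff_separatingLeft.2 ?_
  intro v h
  funext i
  refine hns _ fun b => ?_
  rw [← B3_single]
  exact h _

lemma orthComp_eq (Q : QuadraticForm (ZMod 2) R) (A : Submodule (ZMod 2) R) :
    orthComp Q A = LinearMap.BilinForm.orthogonal Q.polarBilin A := by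
  ext x
  rw [LinearMap.BilinForm.mem_orthogonal_iff]
  constructor
  · intro h a ha
    have := h a ha
    rw [polar_comm] at this
    exact this
  · intro h a ha
    have : polar Q a x = 0 := h a ha
    rwa [polar_comm] at this

lemma mem_coordPart (𝒮 : Submodule (ZMod 2) (Fin 3 → R)) (i j k : Fin 3)
    (hij : i ≠ j) (hik : i ≠ k) (hjk : j ≠ k) (a : R) :
    a ∈ coordPart 𝒮 i j k ↔ Pi.single i a ∈ 𝒮 := by
  constructor
  · rintro ⟨v, ⟨⟨hv, hj⟩, hk⟩, rfl⟩
    have hj' : v j = 0 := hj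
    have hk' : v k = 0 := hk
    have : Pi.single i (proj3 i v) = v := by
      funext l
      by_cases hl : l = i
      · subst hl; simp [proj3]
      · have : l = j ∨ l = k := by omega
        rcases this with rfl | rfl <;> simp [hl, hj', hk']
    rw [this]; exact hv
  · intro h
    refine ⟨Pi.single i a, ⟨⟨h, ?_⟩, ?_⟩, ?_⟩
    · simp [proj3, hij.symm]
    · simp [proj3, hik.symm]
    · simp [proj3]

lemma self_orth [FiniteDimensional (ZMod 2) R] (m : ℕ)
    (Q : QuadraticForm (ZMod 2) R) (hdim : Module.finrank (ZMod 2) R = 2 * m)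
    (hns : QuadNonsingular Q)
    (𝒮 : Submodule (ZMod 2) (Fin 3 → R))
    (hts : ∀ v ∈ 𝒮, Q (v 0) + Q (v 1) + Q (v 2) = 0)
    (hmax : Module.finrank (ZMod 2) 𝒮 = 3 * m) :
    𝒮 = (B3 Q).orthogonal 𝒮 := by
  apply Submodule.eq_of_le_of_finrank_eq
  · intro v hv
    rw [LinearMap.BilinForm.mem_orthogonal_iff]
    intro w hw
    show B3 Q w v = 0
    rw [B3_apply]
    have h1 := hts v hv
    have h2 := hts w hw
    have h3 := hts _ (𝒮.add_mem hw hv)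
    simp only [Pi.add_apply] at h3
    unfold polar
    linear_combination h3 - h1 - h2
  · rw [LinearMap.BilinForm.finrank_orthogonal (B3_nondeg Q hns), hmax,
      Module.finrank_pi_fintype]
    simp [hdim]
    omega

lemma main_aux [FiniteDimensional (ZMod 2) R] (m : ℕ)
    (Q : QuadraticForm (ZMod 2) R) (hdim : Module.finrank (ZMod 2) R = 2 * m)
    (hns : QuadNonsingular Q)
    (𝒮 : Submodule (ZMod 2) (Fin 3 → R))
    (hts : ∀ v ∈ 𝒮, Q (v 0) + Q (v 1) + Q (v 2) = 0)
    (hmax : Module.finrank (ZMod 2) 𝒮 = 3 * m) (i j k : Fin 3)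
    (hij : i ≠ j) (hik : i ≠ k) (hjk : j ≠ k) :
    Submodule.map (proj3 i) 𝒮 = orthComp Q (coordPart 𝒮 i j k) ∧
    Module.finrank (ZMod 2) (Submodule.map (proj3 i) 𝒮) =
      2 * m - Module.finrank (ZMod 2) (coordPart 𝒮 i j k) := by
  have hS := self_orth m Q hdim hns 𝒮 hts hmax
  have key : coordPart 𝒮 i j k =
      LinearMap.BilinForm.orthogonal Q.polarBilin (Submodule.map (proj3 i) 𝒮) := by
    ext a
    rw [mem_coordPart 𝒮 i j k hij hik hjk, hS, LinearMap.BilinForm.mem_orthogonal_iff,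
      ← hS, LinearMap.BilinForm.mem_orthogonal_iff]
    constructor
    · rintro h _ ⟨v, hv, rfl⟩
      have : B3 Q v (Pi.single i a) = 0 := h v hv
      rw [B3_single] at this
      exact this
    · intro h v hv
      show B3 Q v (Pi.single i a) = 0
      rw [B3_single]
      exact h _ ⟨v, hv, rfl⟩
  have e : Submodule.map (proj3 i) 𝒮 = orthComp Q (coordPart 𝒮 i j k) := by
    rw [orthComp_eq, key, LinearMap.BilinForm.orthogonal_orthogonal
      (polarBilin_nondeg Q hns) (polarBilin_refl Q)]
  refine ⟨e, ?_⟩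
  rw [e, orthComp_eq, LinearMap.BilinForm.finrank_orthogonal (polarBilin_nondeg Q hns), hdim]

end Helpers

/-- If 𝒮 is a maximal totally singular subspace of R³ with S₃ = 0 and
k₁ = dim S₁ ≥ k₂ = dim S₂, then ρ_i(𝒮) = S_i^⊥, so dim ρ₃(𝒮) = 2m,
dim ρ₂(𝒮) = 2m - k₂ and dim ρ₁(𝒮) = 2m - k₁. -/
theorem maximal_ts_projections {R : Type*} [AddCommGroup R] [Module (ZMod 2) R]
    [FiniteDimensional (ZMod 2) R] (m : ℕ)
    (Q : QuadraticForm (ZMod 2) R) (hdim : Module.finrank (ZMod 2) R = 2 * m)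
    (hns : QuadNonsingular Q) (htype : IsPlusType Q m)
    (𝒮 : Submodule (ZMod 2) (Fin 3 → R))
    (hts : ∀ v ∈ 𝒮, Q (v 0) + Q (v 1) + Q (v 2) = 0)
    (hmax : Module.finrank (ZMod 2) 𝒮 = 3 * m)
    (h3 : coordPart 𝒮 2 0 1 = ⊥)
    (h12 : Module.finrank (ZMod 2) (coordPart 𝒮 1 0 2) ≤
      Module.finrank (ZMod 2) (coordPart 𝒮 0 1 2)) :
    Submodule.map (proj3 0) 𝒮 = orthComp Q (coordPart 𝒮 0 1 2) ∧
    Submodule.map (proj3 1) 𝒮 = orthComp Q (coordPart 𝒮 1 0 2) ∧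
    Submodule.map (proj3 2) 𝒮 = orthComp Q (coordPart 𝒮 2 0 1) ∧
    Module.finrank (ZMod 2) (Submodule.map (proj3 2) 𝒮) = 2 * m ∧
    Module.finrank (ZMod 2) (Submodule.map (proj3 1) 𝒮) =
      2 * m - Module.finrank (ZMod 2) (coordPart 𝒮 1 0 2) ∧
    Module.finrank (ZMod 2) (Submodule.map (proj3 0) 𝒮) =
      2 * m - Module.finrank (ZMod 2) (coordPart 𝒮 0 1 2) := by
  have a0 := main_aux m Q hdim hns 𝒮 hts hmax 0 1 2 (by decide) (by decide) (by decide)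
  have a1 := main_aux m Q hdim hns 𝒮 hts hmax 1 0 2 (by decide) (by decide) (by decide)
  have a2 := main_aux m Q hdim hns 𝒮 hts hmax 2 0 1 (by decide) (by decide) (by decide)
  refine ⟨a0.1, a1.1, a2.1, ?_, a1.2, a0.2⟩
  rw [a2.2, h3, finrank_bot, Nat.sub_zero]
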